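/- Let K be a number field whose ring of integers R is a principal ideal domain, and let [F,G] be an R-minimal model of a rational map φ of degree d ≥ 2 over K. Then the set {A ∈ GL₂(K) : there exists λ ∈ K^× such that [λF_A, λG_A] has coefficients in R and is an R-minimal model of [φ]} has image in PGL₂(K) equal to a finite union of left cosets of the image of GL₂(R) in PGL₂(K). -/

import Mathlib

noncomputable section

/-- Determinant of the Sylvester matrix of two polynomials, given by coefficient
sequences `p` (regarded as having degree `m`) and `q` (regarded as having degree `n`). -/
def sylRes {K : Type*} [CommRing K] (m n : ℕ) (p q : ℕ → K) : K :=
  Matrix.det (Matrix.of fun i j : Fin (n + m) =>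
    if (i : ℕ) < n then
      (if (i : ℕ) ≤ (j : ℕ) ∧ (j : ℕ) ≤ (i : ℕ) + m then p (m - ((j : ℕ) - (i : ℕ))) else 0)
    else
      (if (i : ℕ) - n ≤ (j : ℕ) ∧ (j : ℕ) ≤ ((i : ℕ) - n) + n then
        q (n - ((j : ℕ) - ((i : ℕ) - n))) else 0))

/-- The binary form of degree `d` with coefficient sequence `f`
(`f i` is the coefficient of `X^i Y^(d-i)`). -/
def toForm {K : Type*} [CommRing K] (d : ℕ) (f : ℕ → K) : MvPolynomial (Fin 2) K :=
  ∑ i ∈ Finset.range (d + 1),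
    MvPolynomial.C (f i) * MvPolynomial.X 0 ^ i * MvPolynomial.X 1 ^ (d - i)

/-- Substitution `X ↦ A₀₀ X + A₀₁ Y`, `Y ↦ A₁₀ X + A₁₁ Y`. -/
def substMat {K : Type*} [CommRing K] (A : Matrix (Fin 2) (Fin 2) K)
    (P : MvPolynomial (Fin 2) K) : MvPolynomial (Fin 2) K :=
  MvPolynomial.eval₂ MvPolynomial.C
    (fun k => MvPolynomial.C (A k 0) * MvPolynomial.X 0 + MvPolynomial.C (A k 1) * MvPolynomial.X 1) P

/-- Coefficient sequence of a binary form of degree `d`. -/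
def coeffVec {K : Type*} [CommRing K] (d : ℕ) (P : MvPolynomial (Fin 2) K) : ℕ → K :=
  fun i => MvPolynomial.coeff (Finsupp.single (0 : Fin 2) i + Finsupp.single (1 : Fin 2) (d - i)) P

/-- Coefficients of `F_A = δ·(F∘A) − β·(G∘A)` for `A = [[α,β],[γ,δ]]`. -/
def FA {K : Type*} [CommRing K] (d : ℕ) (f g : ℕ → K) (A : Matrix (Fin 2) (Fin 2) K) : ℕ → K :=
  coeffVec d (MvPolynomial.C (A 1 1) * substMat A (toForm d f) -
    MvPolynomial.C (A 0 1) * substMat A (toForm d g))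

/-- Coefficients of `G_A = −γ·(F∘A) + α·(G∘A)` for `A = [[α,β],[γ,δ]]`. -/
def GA {K : Type*} [CommRing K] (d : ℕ) (f g : ℕ → K) (A : Matrix (Fin 2) (Fin 2) K) : ℕ → K :=
  coeffVec d (-(MvPolynomial.C (A 1 0)) * substMat A (toForm d f) +
    MvPolynomial.C (A 0 0) * substMat A (toForm d g))

/-- The ideal `Res_R([φ])`: generated by the resultants of all models over `R`
of the form `[F,G]^{(λ,A)}` with `(λ,A) ∈ K^× × GL₂(K)`. -/
def ResIdeal (R : Type*) {K : Type*} [CommRing R] [Field K] [Algebra R K]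
    (d : ℕ) (f g : ℕ → K) : Ideal R :=
  Ideal.span { r : R | ∃ (l : K) (A : Matrix (Fin 2) (Fin 2) K), l ≠ 0 ∧ A.det ≠ 0 ∧
    (∀ i, ∃ a : R, algebraMap R K a = l * FA d f g A i) ∧
    (∀ i, ∃ b : R, algebraMap R K b = l * GA d f g A i) ∧
    algebraMap R K r = sylRes d d (fun i => l * FA d f g A i) (fun i => l * GA d f g A i) }

/-- The ideal `Res_R([φ]₁)`: as `ResIdeal` but with `A` restricted to affine
(upper-triangular) transformations. -/
def AffResIdeal (R : Type*) {K : Type*} [CommRing R] [Field K] [Algebra R K]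
    (d : ℕ) (f g : ℕ → K) : Ideal R :=
  Ideal.span { r : R | ∃ (l : K) (A : Matrix (Fin 2) (Fin 2) K), l ≠ 0 ∧ A.det ≠ 0 ∧ A 1 0 = 0 ∧
    (∀ i, ∃ a : R, algebraMap R K a = l * FA d f g A i) ∧
    (∀ i, ∃ b : R, algebraMap R K b = l * GA d f g A i) ∧
    algebraMap R K r = sylRes d d (fun i => l * FA d f g A i) (fun i => l * GA d f g A i) }



/-! ## Forms and coefficient sequences -/

open MvPolynomial in
theorem s15_coeff_mono {K : Type*} [CommRing K] (a : K) (i j i' j' : ℕ) :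
    MvPolynomial.coeff (Finsupp.single (0 : Fin 2) i' + Finsupp.single (1 : Fin 2) j')
      (MvPolynomial.C a * MvPolynomial.X 0 ^ i * MvPolynomial.X 1 ^ j) =
      if i = i' ∧ j = j' then a else 0 := by
  have h : (C a * X 0 ^ i * X 1 ^ j : MvPolynomial (Fin 2) K) =
      monomial (Finsupp.single (0 : Fin 2) i + Finsupp.single (1 : Fin 2) j) a := by
    rw [X_pow_eq_monomial, X_pow_eq_monomial, C_mul_monomial, monomial_mul]; simp
  rw [h, coeff_monomial]
  congr 1
  apply propext
  constructor
  · intro h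
    have h0 := DFunLike.congr_fun h 0
    have h1 := DFunLike.congr_fun h 1
    simp at h0 h1
    exact ⟨h0, h1⟩
  · rintro ⟨rfl, rfl⟩; rfl

theorem s15_fs_eq (m : Fin 2 →₀ ℕ) :
    m = Finsupp.single (0 : Fin 2) (m 0) + Finsupp.single (1 : Fin 2) (m 1) := by
  ext k; fin_cases k <;> simp

theorem s15_coeffVec_toForm {K : Type*} [CommRing K] (d : ℕ) (f : ℕ → K) (i : ℕ) (hi : i ≤ d) :
    coeffVec d (toForm d f) i = f i := by
  unfold coeffVec toForm
  rw [MvPolynomial.coeff_sum, Finset.sum_eq_single i]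
  · rw [s15_coeff_mono]; simp
  · intro b hb hbi
    rw [s15_coeff_mono, if_neg]
    tauto
  · intro h; simp at h; omega

theorem s15_toForm_homog {K : Type*} [CommRing K] (d : ℕ) (f : ℕ → K) :
    (toForm d f).IsHomogeneous d := by
  unfold toForm
  apply MvPolynomial.IsHomogeneous.sum
  intro i hi
  have hi' : 0 + i + (d - i) = d := by simp at hi; omega
  have := ((MvPolynomial.isHomogeneous_C (Fin 2) (f i)).mul
    (MvPolynomial.isHomogeneous_X_pow (R := K) (0 : Fin 2) i)).mul
    (MvPolynomial.isHomogeneous_X_pow (R := K) (1 : Fin 2) (d - i))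
  rwa [hi'] at this

theorem s15_toForm_coeffVec {K : Type*} [CommRing K] (d : ℕ) (P : MvPolynomial (Fin 2) K)
    (hP : P.IsHomogeneous d) : toForm d (coeffVec d P) = P := by
  ext m
  by_cases hm : m 0 + m 1 = d
  · have h1 : m 1 = d - m 0 := by omega
    rw [s15_fs_eq m, h1]
    have := s15_coeffVec_toForm d (coeffVec d P) (m 0) (by omega)
    exact this
  · have hd : m.degree ≠ d := by
      intro h; apply hm; rw [← h]; simp [Finsupp.degree_eq_sum]
    rw [hP.coeff_eq_zero hd, (s15_toForm_homog d _).coeff_eq_zero hd]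

/-- The substitution as an algebra homomorphism. -/
def s15_sub {K : Type*} [CommRing K] (A : Matrix (Fin 2) (Fin 2) K) :
    MvPolynomial (Fin 2) K →ₐ[K] MvPolynomial (Fin 2) K :=
  MvPolynomial.aeval (fun k => MvPolynomial.C (A k 0) * MvPolynomial.X 0 +
    MvPolynomial.C (A k 1) * MvPolynomial.X 1)

theorem s15_substMat_eq {K : Type*} [CommRing K] (A : Matrix (Fin 2) (Fin 2) K)
    (P : MvPolynomial (Fin 2) K) : substMat A P = s15_sub A P := rfl

theorem s15_sub_C {K : Type*} [CommRing K] (A : Matrix (Fin 2) (Fin 2) K) (a : K) :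
    s15_sub A (MvPolynomial.C a) = MvPolynomial.C a := by
  simp [s15_sub]

theorem s15_sub_X {K : Type*} [CommRing K] (A : Matrix (Fin 2) (Fin 2) K) (k : Fin 2) :
    s15_sub A (MvPolynomial.X k) = MvPolynomial.C (A k 0) * MvPolynomial.X 0 +
    MvPolynomial.C (A k 1) * MvPolynomial.X 1 := by
  simp [s15_sub]

theorem s15_sub_mul {K : Type*} [CommRing K] (A B : Matrix (Fin 2) (Fin 2) K)
    (P : MvPolynomial (Fin 2) K) : s15_sub B (s15_sub A P) = s15_sub (A * B) P := by
  have h : (s15_sub B).comp (s15_sub A) = s15_sub (A * B) := by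
    apply MvPolynomial.algHom_ext
    intro k
    simp only [AlgHom.comp_apply, s15_sub_X, map_add, map_mul, s15_sub_C, Matrix.mul_apply,
      Fin.sum_univ_two]
    ring
  rw [← h, AlgHom.comp_apply]

theorem s15_sub_homog {K : Type*} [CommRing K] (A : Matrix (Fin 2) (Fin 2) K) (n : ℕ)
    (P : MvPolynomial (Fin 2) K) (hP : P.IsHomogeneous n) : (s15_sub A P).IsHomogeneous n := by
  have := hP.aeval (S := K) (n := 1) (fun k => MvPolynomial.C (A k 0) * MvPolynomial.X (0 : Fin 2) +
    MvPolynomial.C (A k 1) * MvPolynomial.X (1 : Fin 2)) (by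
      intro i
      exact (MvPolynomial.isHomogeneous_C_mul_X _ _).add (MvPolynomial.isHomogeneous_C_mul_X _ _))
  rwa [one_mul] at this

theorem s15_toForm_FA {K : Type*} [CommRing K] (d : ℕ) (f g : ℕ → K)
    (A : Matrix (Fin 2) (Fin 2) K) :
    toForm d (FA d f g A) = MvPolynomial.C (A 1 1) * s15_sub A (toForm d f) -
      MvPolynomial.C (A 0 1) * s15_sub A (toForm d g) := by
  unfold FA
  rw [s15_toForm_coeffVec]
  · rfl
  · have h1 := (s15_sub_homog A d _ (s15_toForm_homog d f)).C_mul (A 1 1)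
    have h2 := (s15_sub_homog A d _ (s15_toForm_homog d g)).C_mul (A 0 1)
    exact h1.sub h2

theorem s15_toForm_GA {K : Type*} [CommRing K] (d : ℕ) (f g : ℕ → K)
    (A : Matrix (Fin 2) (Fin 2) K) :
    toForm d (GA d f g A) = -(MvPolynomial.C (A 1 0)) * s15_sub A (toForm d f) +
      MvPolynomial.C (A 0 0) * s15_sub A (toForm d g) := by
  unfold GA
  rw [s15_toForm_coeffVec]
  · rfl
  · have h1 := (s15_sub_homog A d _ (s15_toForm_homog d f)).C_mul (-(A 1 0))
    have h2 := (s15_sub_homog A d _ (s15_toForm_homog d g)).C_mul (A 0 0)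
    rw [map_neg] at h1
    exact h1.add h2

theorem s15_FA_eq {K : Type*} [CommRing K] (d : ℕ) (f g : ℕ → K)
    (A : Matrix (Fin 2) (Fin 2) K) :
    FA d f g A = coeffVec d (MvPolynomial.C (A 1 1) * s15_sub A (toForm d f) -
      MvPolynomial.C (A 0 1) * s15_sub A (toForm d g)) := rfl

theorem s15_GA_eq {K : Type*} [CommRing K] (d : ℕ) (f g : ℕ → K)
    (A : Matrix (Fin 2) (Fin 2) K) :
    GA d f g A = coeffVec d (-(MvPolynomial.C (A 1 0)) * s15_sub A (toForm d f) +
      MvPolynomial.C (A 0 0) * s15_sub A (toForm d g)) := rfl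

theorem s15_FA_mul {K : Type*} [CommRing K] (d : ℕ) (f g : ℕ → K)
    (A B : Matrix (Fin 2) (Fin 2) K) :
    FA d (FA d f g A) (GA d f g A) B = FA d f g (A * B) := by
  rw [s15_FA_eq d (FA d f g A), s15_FA_eq d f g (A * B), s15_toForm_FA, s15_toForm_GA]
  refine congrArg (coeffVec d) ?_
  simp only [map_add, map_sub, map_mul, map_neg, s15_sub_C, s15_sub_mul, Matrix.mul_apply,
    Fin.sum_univ_two]
  generalize s15_sub (A * B) (toForm d f) = p
  generalize s15_sub (A * B) (toForm d g) = q
  ring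

theorem s15_GA_mul {K : Type*} [CommRing K] (d : ℕ) (f g : ℕ → K)
    (A B : Matrix (Fin 2) (Fin 2) K) :
    GA d (FA d f g A) (GA d f g A) B = GA d f g (A * B) := by
  rw [s15_GA_eq d (FA d f g A), s15_GA_eq d f g (A * B), s15_toForm_FA, s15_toForm_GA]
  refine congrArg (coeffVec d) ?_
  simp only [map_add, map_sub, map_mul, map_neg, s15_sub_C, s15_sub_mul, Matrix.mul_apply,
    Fin.sum_univ_two]
  generalize s15_sub (A * B) (toForm d f) = p
  generalize s15_sub (A * B) (toForm d g) = q
  ring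

theorem s15_toForm_smul {K : Type*} [CommRing K] (d : ℕ) (f : ℕ → K) (l : K) :
    toForm d (fun i => l * f i) = MvPolynomial.C l * toForm d f := by
  unfold toForm
  rw [Finset.mul_sum]
  apply Finset.sum_congr rfl
  intro i _
  rw [map_mul]; ring

theorem s15_FA_lin {K : Type*} [CommRing K] (d : ℕ) (f g : ℕ → K) (l : K)
    (A : Matrix (Fin 2) (Fin 2) K) (i : ℕ) :
    FA d (fun i => l * f i) (fun i => l * g i) A i = l * FA d f g A i := by
  unfold FA coeffVec
  rw [← MvPolynomial.coeff_C_mul]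
  congr 1
  simp only [s15_substMat_eq, s15_toForm_smul, map_mul, s15_sub_C]
  ring

theorem s15_GA_lin {K : Type*} [CommRing K] (d : ℕ) (f g : ℕ → K) (l : K)
    (A : Matrix (Fin 2) (Fin 2) K) (i : ℕ) :
    GA d (fun i => l * f i) (fun i => l * g i) A i = l * GA d f g A i := by
  unfold GA coeffVec
  rw [← MvPolynomial.coeff_C_mul]
  congr 1
  simp only [s15_substMat_eq, s15_toForm_smul, map_mul, s15_sub_C]
  ring

theorem s15_sub_toForm {K : Type*} [CommRing K] (d : ℕ) (f : ℕ → K)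
    (A : Matrix (Fin 2) (Fin 2) K) :
    s15_sub A (toForm d f) = ∑ i ∈ Finset.range (d + 1), MvPolynomial.C (f i) *
      (MvPolynomial.C (A 0 0) * MvPolynomial.X 0 + MvPolynomial.C (A 0 1) * MvPolynomial.X 1) ^ i *
      (MvPolynomial.C (A 1 0) * MvPolynomial.X 0 +
        MvPolynomial.C (A 1 1) * MvPolynomial.X 1) ^ (d - i) := by
  unfold toForm
  simp only [map_sum, map_mul, map_pow, s15_sub_C, s15_sub_X]

theorem s15_sub_smul {K : Type*} [CommRing K] (d : ℕ) (f : ℕ → K) (c : K)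
    (A : Matrix (Fin 2) (Fin 2) K) :
    s15_sub (c • A) (toForm d f) = MvPolynomial.C c ^ d * s15_sub A (toForm d f) := by
  rw [s15_sub_toForm, s15_sub_toForm, Finset.mul_sum]
  apply Finset.sum_congr rfl
  intro i hi
  have hi' : d = i + (d - i) := by simp at hi; omega
  have e1 : ∀ a b : K, (MvPolynomial.C (c * a) * MvPolynomial.X (0 : Fin 2) +
      MvPolynomial.C (c * b) * MvPolynomial.X (1 : Fin 2) : MvPolynomial (Fin 2) K) =
      MvPolynomial.C c * (MvPolynomial.C a * MvPolynomial.X (0 : Fin 2) +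
      MvPolynomial.C b * MvPolynomial.X (1 : Fin 2)) := by
    intro a b; simp only [map_mul]; ring
  simp only [Matrix.smul_apply, smul_eq_mul, e1, mul_pow]
  have e2 : (MvPolynomial.C c : MvPolynomial (Fin 2) K) ^ d =
    MvPolynomial.C c ^ i * MvPolynomial.C c ^ (d - i) := by rw [← pow_add, ← hi']
  rw [e2]; ring

theorem s15_FA_smul {K : Type*} [CommRing K] (d : ℕ) (f g : ℕ → K) (c : K)
    (A : Matrix (Fin 2) (Fin 2) K) (i : ℕ) :
    FA d f g (c • A) i = c ^ (d + 1) * FA d f g A i := by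
  unfold FA coeffVec
  rw [← MvPolynomial.coeff_C_mul]
  congr 1
  simp only [s15_substMat_eq, s15_sub_smul, Matrix.smul_apply, smul_eq_mul, map_mul, map_pow]
  ring

theorem s15_GA_smul {K : Type*} [CommRing K] (d : ℕ) (f g : ℕ → K) (c : K)
    (A : Matrix (Fin 2) (Fin 2) K) (i : ℕ) :
    GA d f g (c • A) i = c ^ (d + 1) * GA d f g A i := by
  unfold GA coeffVec
  rw [← MvPolynomial.coeff_C_mul]
  congr 1
  simp only [s15_substMat_eq, s15_sub_smul, Matrix.smul_apply, smul_eq_mul, map_mul, map_pow]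
  ring

theorem s15_toForm_map {R K : Type*} [CommRing R] [CommRing K] (φ : R →+* K) (d : ℕ)
    (f : ℕ → R) : toForm d (fun i => φ (f i)) = MvPolynomial.map φ (toForm d f) := by
  unfold toForm
  simp

theorem s15_sub_map {R K : Type*} [CommRing R] [CommRing K] (φ : R →+* K)
    (A : Matrix (Fin 2) (Fin 2) R) (P : MvPolynomial (Fin 2) R) :
    s15_sub (A.map φ) (MvPolynomial.map φ P) = MvPolynomial.map φ (s15_sub A P) := by
  induction P using MvPolynomial.induction_on with
  | C a => simp
  | add p q hp hq => simp [hp, hq]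
  | mul_X p k hp => simp [hp, s15_sub_X]

theorem s15_FA_map {R K : Type*} [CommRing R] [CommRing K] (φ : R →+* K) (d : ℕ)
    (f g : ℕ → R) (A : Matrix (Fin 2) (Fin 2) R) (i : ℕ) :
    FA d (fun i => φ (f i)) (fun i => φ (g i)) (A.map φ) i = φ (FA d f g A i) := by
  unfold FA coeffVec
  rw [← MvPolynomial.coeff_map]
  congr 1
  simp [s15_substMat_eq, s15_toForm_map, s15_sub_map]

theorem s15_GA_map {R K : Type*} [CommRing R] [CommRing K] (φ : R →+* K) (d : ℕ)
    (f g : ℕ → R) (A : Matrix (Fin 2) (Fin 2) R) (i : ℕ) :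
    GA d (fun i => φ (f i)) (fun i => φ (g i)) (A.map φ) i = φ (GA d f g A i) := by
  unfold GA coeffVec
  rw [← MvPolynomial.coeff_map]
  congr 1
  simp [s15_substMat_eq, s15_toForm_map, s15_sub_map]

theorem s15_sylRes_map {R K : Type*} [CommRing R] [CommRing K] (φ : R →+* K) (m n : ℕ)
    (f g : ℕ → R) : sylRes m n (fun i => φ (f i)) (fun i => φ (g i)) = φ (sylRes m n f g) := by
  unfold sylRes
  rw [RingHom.map_det]
  congr 1
  ext i j
  simp only [Matrix.of_apply, RingHom.mapMatrix_apply, Matrix.map_apply]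
  split_ifs <;> simp

theorem s15_sub_diag_coeff {K : Type*} [CommRing K] (d : ℕ) (f : ℕ → K) (a b : K) (i : ℕ)
    (hi : i ≤ d) :
    coeffVec d (s15_sub (Matrix.diagonal ![a, b]) (toForm d f)) i = f i * a ^ i * b ^ (d - i) := by
  have : s15_sub (Matrix.diagonal ![a, b]) (toForm d f) =
      toForm d (fun i => f i * a ^ i * b ^ (d - i)) := by
    rw [s15_sub_toForm]
    unfold toForm
    apply Finset.sum_congr rfl
    intro i _
    simp [mul_pow]
    ring
  rw [this, s15_coeffVec_toForm _ _ _ hi]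

theorem s15_FA_diag {K : Type*} [CommRing K] (d : ℕ) (f g : ℕ → K) (a b : K) (i : ℕ)
    (hi : i ≤ d) :
    FA d f g (Matrix.diagonal ![a, b]) i = b * (f i * a ^ i * b ^ (d - i)) := by
  rw [← s15_sub_diag_coeff d f a b i hi]
  unfold FA coeffVec
  simp [s15_substMat_eq]

theorem s15_GA_diag {K : Type*} [CommRing K] (d : ℕ) (f g : ℕ → K) (a b : K) (i : ℕ)
    (hi : i ≤ d) :
    GA d f g (Matrix.diagonal ![a, b]) i = a * (g i * a ^ i * b ^ (d - i)) := by
  rw [← s15_sub_diag_coeff d g a b i hi]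
  unfold GA coeffVec
  simp [s15_substMat_eq]

theorem s15_sylRes_mem_zero {R : Type*} [CommRing R] (d : ℕ) (hd : 0 < d) (f g : ℕ → R) :
    sylRes d d f g ∈ Ideal.span {f 0, g 0} := by
  rw [← Ideal.Quotient.eq_zero_iff_mem, ← s15_sylRes_map]
  have hf : Ideal.Quotient.mk (Ideal.span {f 0, g 0}) (f 0) = 0 :=
    Ideal.Quotient.eq_zero_iff_mem.mpr (Ideal.subset_span (by simp))
  have hg : Ideal.Quotient.mk (Ideal.span {f 0, g 0}) (g 0) = 0 :=
    Ideal.Quotient.eq_zero_iff_mem.mpr (Ideal.subset_span (by simp))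
  unfold sylRes
  apply Matrix.det_eq_zero_of_column_eq_zero ⟨d + d - 1, by omega⟩
  rintro ⟨i, hi⟩
  simp only [Matrix.of_apply]
  split_ifs with h1 h2 h3
  · have : d - (d + d - 1 - i) = 0 := by omega
    rw [this, hf]
  · rfl
  · have : d - (d + d - 1 - (i - d)) = 0 := by omega
    rw [this, hg]
  · rfl

theorem s15_sylRes_mem_top {R : Type*} [CommRing R] (d : ℕ) (hd : 0 < d) (f g : ℕ → R) :
    sylRes d d f g ∈ Ideal.span {f d, g d} := by
  rw [← Ideal.Quotient.eq_zero_iff_mem, ← s15_sylRes_map]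
  have hf : Ideal.Quotient.mk (Ideal.span {f d, g d}) (f d) = 0 :=
    Ideal.Quotient.eq_zero_iff_mem.mpr (Ideal.subset_span (by simp))
  have hg : Ideal.Quotient.mk (Ideal.span {f d, g d}) (g d) = 0 :=
    Ideal.Quotient.eq_zero_iff_mem.mpr (Ideal.subset_span (by simp))
  unfold sylRes
  apply Matrix.det_eq_zero_of_column_eq_zero ⟨0, by omega⟩
  rintro ⟨i, hi⟩
  simp only [Matrix.of_apply]
  split_ifs with h1 h2 h3
  · have : d - (0 - i) = d := by omega
    rw [this, hf]
  · rfl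
  · have : d - (0 - (i - d)) = d := by omega
    rw [this, hg]
  · rfl

/-! ## The resultant of a transformed pair -/

/-- The monomial `X^(k-1-i) Y^i`. -/
def s15_bas {K : Type*} [CommRing K] (k i : ℕ) : MvPolynomial (Fin 2) K :=
  MvPolynomial.monomial (Finsupp.single (0 : Fin 2) (k - 1 - i) + Finsupp.single (1 : Fin 2) i) 1

/-- The coefficient of `X^(k-1-j) Y^j`. -/
def s15_co {K : Type*} [CommRing K] (k : ℕ) (P : MvPolynomial (Fin 2) K) (j : ℕ) : K :=
  MvPolynomial.coeff (Finsupp.single (0 : Fin 2) (k - 1 - j) + Finsupp.single (1 : Fin 2) j) P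

theorem s15_bas_eq {K : Type*} [CommRing K] (k i : ℕ) :
    (s15_bas k i : MvPolynomial (Fin 2) K) =
      MvPolynomial.X 0 ^ (k - 1 - i) * MvPolynomial.X 1 ^ i := by
  unfold s15_bas
  rw [MvPolynomial.X_pow_eq_monomial, MvPolynomial.X_pow_eq_monomial, MvPolynomial.monomial_mul]
  simp

theorem s15_bas_homog {K : Type*} [CommRing K] (k i : ℕ) (hi : i < k) :
    (s15_bas k i : MvPolynomial (Fin 2) K).IsHomogeneous (k - 1) := by
  rw [s15_bas_eq]
  have := (MvPolynomial.isHomogeneous_X_pow (R := K) (0 : Fin 2) (k - 1 - i)).mul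
    (MvPolynomial.isHomogeneous_X_pow (R := K) (1 : Fin 2) i)
  have hi' : k - 1 - i + i = k - 1 := by omega
  rwa [hi'] at this

theorem s15_expand {K : Type*} [CommRing K] (k : ℕ) (hk : 0 < k) (P : MvPolynomial (Fin 2) K)
    (hP : P.IsHomogeneous (k - 1)) :
    P = ∑ j : Fin k, MvPolynomial.C (s15_co k P j) * s15_bas k j := by
  conv_lhs => rw [← s15_toForm_coeffVec _ P hP]
  unfold toForm
  rw [Fin.sum_univ_eq_sum_range (fun j => MvPolynomial.C (s15_co k P j) * s15_bas k j) k,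
    show k - 1 + 1 = k by omega, ← Finset.sum_range_reflect]
  apply Finset.sum_congr rfl
  intro i hi
  have hi' : k - 1 - (k - 1 - i) = i := by simp at hi; omega
  rw [s15_bas_eq, hi', mul_assoc]
  unfold coeffVec s15_co
  rw [hi']

theorem s15_co_add {K : Type*} [CommRing K] (k : ℕ) (P Q : MvPolynomial (Fin 2) K) (j : ℕ) :
    s15_co k (P + Q) j = s15_co k P j + s15_co k Q j := by simp [s15_co]

theorem s15_co_C_mul {K : Type*} [CommRing K] (k : ℕ) (a : K) (P : MvPolynomial (Fin 2) K)
    (j : ℕ) : s15_co k (MvPolynomial.C a * P) j = a * s15_co k P j := by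
  simp [s15_co, MvPolynomial.coeff_C_mul]

theorem s15_co_sum {K : Type*} [CommRing K] {ι : Type*} (s : Finset ι) (k : ℕ)
    (P : ι → MvPolynomial (Fin 2) K) (j : ℕ) :
    s15_co k (∑ i ∈ s, P i) j = ∑ i ∈ s, s15_co k (P i) j := by
  simp [s15_co, MvPolynomial.coeff_sum]

/-- Sylvester matrix of two forms. -/
def s15_S {K : Type*} [CommRing K] (d : ℕ) (F G : MvPolynomial (Fin 2) K) :
    Matrix (Fin d ⊕ Fin d) (Fin (d + d)) K :=
  fun r j => Sum.elim (fun i : Fin d => s15_co (d + d) (s15_bas d i * F) j)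
    (fun i : Fin d => s15_co (d + d) (s15_bas d i * G) j) r

/-- Resultant of two forms. -/
def s15_Res {K : Type*} [CommRing K] (d : ℕ) (F G : MvPolynomial (Fin 2) K) : K :=
  Matrix.det ((s15_S d F G).submatrix finSumFinEquiv.symm id)

theorem s15_entry {K : Type*} [CommRing K] (d i j : ℕ) (hi : i < d) (hj : j < d + d)
    (f : ℕ → K) : s15_co (d + d) (s15_bas d i * toForm d f) j =
      if i ≤ j ∧ j ≤ i + d then f (d - (j - i)) else 0 := by
  unfold s15_co s15_bas
  rw [MvPolynomial.coeff_monomial_mul', one_mul]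
  by_cases h : i ≤ j ∧ j ≤ i + d
  · rw [if_pos h, if_pos]
    · rw [← s15_coeffVec_toForm d f (d - (j - i)) (by omega)]
      unfold coeffVec
      congr 1
      ext k; fin_cases k
      · simp; omega
      · simp; omega
    · intro k; fin_cases k
      · simp; omega
      · simp; omega
  · rw [if_neg h, if_neg]
    intro hle
    have h0 := hle 0
    have h1 := hle 1
    simp at h0 h1
    omega

theorem s15_sylRes_eq {K : Type*} [CommRing K] (d : ℕ) (f g : ℕ → K) :
    sylRes d d f g = s15_Res d (toForm d f) (toForm d g) := by
  unfold sylRes s15_Res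
  congr 1
  ext i j
  induction i using Fin.addCases with
  | left i =>
    have hl : ((Fin.castAdd d i : Fin (d + d)) : ℕ) = i := rfl
    have h2 : finSumFinEquiv.symm (Fin.castAdd d i) = Sum.inl i :=
      finSumFinEquiv_symm_apply_castAdd i
    simp only [s15_S, Matrix.of_apply, Matrix.submatrix_apply, h2, Sum.elim_inl, id, hl, i.2,
      if_true, s15_entry d i j i.2 j.2]
  | right i =>
    have hl : ((Fin.natAdd d i : Fin (d + d)) : ℕ) = d + i := rfl
    have h2 : finSumFinEquiv.symm (Fin.natAdd d i) = Sum.inr i :=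
      finSumFinEquiv_symm_apply_natAdd i
    have h3 : ¬ (d + (i : ℕ) < d) := by omega
    have h4 : d + (i : ℕ) - d = i := by omega
    simp only [s15_S, Matrix.of_apply, Matrix.submatrix_apply, h2, Sum.elim_inr, id, hl, h3,
      if_false, h4, s15_entry d i j i.2 j.2]

theorem s15_det_left {K : Type*} [CommRing K] (d : ℕ)
    (B : Matrix (Fin d ⊕ Fin d) (Fin d ⊕ Fin d) K) (S : Matrix (Fin d ⊕ Fin d) (Fin (d + d)) K) :
    ((B * S).submatrix finSumFinEquiv.symm id).det =
      B.det * (S.submatrix finSumFinEquiv.symm id).det := by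
  rw [← Matrix.submatrix_mul_equiv B S _ finSumFinEquiv.symm id, Matrix.det_mul,
    Matrix.det_submatrix_equiv_self]

theorem s15_det_right {K : Type*} [CommRing K] (d : ℕ)
    (B : Matrix (Fin (d + d)) (Fin (d + d)) K) (S : Matrix (Fin d ⊕ Fin d) (Fin (d + d)) K) :
    ((S * B).submatrix finSumFinEquiv.symm id).det =
      (S.submatrix finSumFinEquiv.symm id).det * B.det := by
  rw [← Matrix.det_mul]
  rfl

theorem s15_Res_comb {K : Type*} [CommRing K] (d : ℕ) (F G : MvPolynomial (Fin 2) K)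
    (a b c e : K) :
    s15_Res d (MvPolynomial.C a * F + MvPolynomial.C b * G)
      (MvPolynomial.C c * F + MvPolynomial.C e * G) = (a * e - b * c) ^ d * s15_Res d F G := by
  unfold s15_Res
  have h : s15_S d (MvPolynomial.C a * F + MvPolynomial.C b * G)
      (MvPolynomial.C c * F + MvPolynomial.C e * G) =
      Matrix.fromBlocks (a • (1 : Matrix (Fin d) (Fin d) K)) (b • (1 : Matrix (Fin d) (Fin d) K))
        (c • (1 : Matrix (Fin d) (Fin d) K)) (e • (1 : Matrix (Fin d) (Fin d) K)) *
        s15_S d F G := by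
    ext r j
    rw [Matrix.mul_apply, Fintype.sum_sum_type]
    rcases r with i | i
    · simp [s15_S, Matrix.one_apply, mul_add, s15_co_add, mul_left_comm _ (MvPolynomial.C _),
        s15_co_C_mul]
    · simp [s15_S, Matrix.one_apply, mul_add, s15_co_add, mul_left_comm _ (MvPolynomial.C _),
        s15_co_C_mul]
  rw [h, s15_det_left]
  congr 1
  let σ : Fin d ⊕ Fin d ≃ Fin 2 × Fin d :=
    { toFun := Sum.elim (fun i => (0, i)) (fun i => (1, i))
      invFun := fun p => if p.1 = 0 then Sum.inl p.2 else Sum.inr p.2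
      left_inv := by rintro (i | i) <;> simp
      right_inv := by rintro ⟨k, i⟩; fin_cases k <;> simp }
  have h2 : Matrix.fromBlocks (a • (1 : Matrix (Fin d) (Fin d) K))
        (b • (1 : Matrix (Fin d) (Fin d) K))
        (c • (1 : Matrix (Fin d) (Fin d) K)) (e • (1 : Matrix (Fin d) (Fin d) K)) =
      (Matrix.kroneckerMap (· * ·) !![a, b; c, e] (1 : Matrix (Fin d) (Fin d) K)).submatrix σ σ := by
    ext r s
    rcases r with i | i <;> rcases s with j | j <;> simp [σ]
  rw [h2, Matrix.det_submatrix_equiv_self]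
  have h3 := Matrix.det_kronecker !![a, b; c, e] (1 : Matrix (Fin d) (Fin d) K)
  rw [h3]
  simp [Matrix.det_fin_two]

/-- The matrix of the substitution on forms of degree `k-1`. -/
def s15_rho {K : Type*} [CommRing K] (k : ℕ) (A : Matrix (Fin 2) (Fin 2) K) :
    Matrix (Fin k) (Fin k) K := fun i j => s15_co k (s15_sub A (s15_bas k i)) j

theorem s15_sub_bas {K : Type*} [CommRing K] (k : ℕ) (A : Matrix (Fin 2) (Fin 2) K) (i : Fin k) :
    s15_sub A (s15_bas k i) = ∑ j : Fin k, MvPolynomial.C (s15_rho k A i j) * s15_bas k j :=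
  s15_expand k (by have := i.2; omega) _ (s15_sub_homog _ _ _ (s15_bas_homog k i i.2))

theorem s15_co_sub {K : Type*} [CommRing K] (k : ℕ) (hk : 0 < k) (A : Matrix (Fin 2) (Fin 2) K)
    (P : MvPolynomial (Fin 2) K) (hP : P.IsHomogeneous (k - 1)) (j : Fin k) :
    s15_co k (s15_sub A P) j = ∑ i : Fin k, s15_co k P i * s15_rho k A i j := by
  conv_lhs => rw [s15_expand k hk P hP]
  rw [map_sum, s15_co_sum]
  apply Finset.sum_congr rfl
  intro i _
  rw [map_mul, s15_sub_C, s15_co_C_mul]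
  rfl

theorem s15_rho_mul {K : Type*} [CommRing K] (k : ℕ) (hk : 0 < k)
    (A B : Matrix (Fin 2) (Fin 2) K) : s15_rho k (A * B) = s15_rho k A * s15_rho k B := by
  ext i j
  rw [Matrix.mul_apply]
  rw [s15_rho, ← s15_sub_mul, s15_co_sub k hk _ _ (s15_sub_homog _ _ _ (s15_bas_homog k i i.2))]
  rfl

theorem s15_Res_sub {K : Type*} [CommRing K] (d : ℕ) (hd : 0 < d) (F G : MvPolynomial (Fin 2) K)
    (hF : F.IsHomogeneous d) (hG : G.IsHomogeneous d) (A : Matrix (Fin 2) (Fin 2) K) :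
    s15_Res d F G * (s15_rho (d + d) A).det =
      (s15_rho d A).det ^ 2 * s15_Res d (s15_sub A F) (s15_sub A G) := by
  unfold s15_Res
  have hdd : d - 1 + d = d + d - 1 := by omega
  have key : ∀ (H : MvPolynomial (Fin 2) K) (_ : H.IsHomogeneous d) (i : Fin d) (j : Fin (d + d)),
      ∑ x : Fin (d + d), s15_co (d + d) (s15_bas d i * H) x * s15_rho (d + d) A x j =
      ∑ x : Fin d, s15_rho d A i x * s15_co (d + d) (s15_bas d x * s15_sub A H) j := by
    intro H hH i j
    have hh := (s15_bas_homog (K := K) d i i.2).mul hH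
    rw [hdd] at hh
    rw [← s15_co_sub (d + d) (by omega) A _ hh, map_mul, s15_sub_bas, Finset.sum_mul, s15_co_sum]
    apply Finset.sum_congr rfl
    intro x _
    rw [mul_assoc, s15_co_C_mul]
  have h : s15_S d F G * s15_rho (d + d) A =
      Matrix.fromBlocks (s15_rho d A) 0 0 (s15_rho d A) *
        s15_S d (s15_sub A F) (s15_sub A G) := by
    ext r j
    rw [Matrix.mul_apply, Matrix.mul_apply, Fintype.sum_sum_type]
    rcases r with i | i
    · simpa [s15_S] using key F hF i j
    · simpa [s15_S] using key G hG i j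
  rw [← s15_det_right, h, s15_det_left, Matrix.det_fromBlocks_zero₂₁, pow_two]

theorem s15_coeff_lin_pow {K : Type*} [CommRing K] (a b : K) (m : ℕ) :
    MvPolynomial.coeff (Finsupp.single (0 : Fin 2) m)
      ((MvPolynomial.C a * MvPolynomial.X 0 + MvPolynomial.C b * MvPolynomial.X 1) ^ m) = a ^ m := by
  induction m with
  | zero => simp
  | succ m ih =>
    rw [pow_succ, mul_add, ← mul_assoc, ← mul_assoc, MvPolynomial.coeff_add,
      MvPolynomial.coeff_mul_X', MvPolynomial.coeff_mul_X', mul_comm _ (MvPolynomial.C a),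
      MvPolynomial.coeff_C_mul, if_pos (by simp), if_neg (by simp)]
    have : (Finsupp.single (0 : Fin 2) (m + 1) - Finsupp.single (0 : Fin 2) 1) =
      Finsupp.single (0 : Fin 2) m := by
      ext k; fin_cases k <;> simp
    rw [this, ih, add_zero, pow_succ, mul_comm]

theorem s15_coeff_lin_pow' {K : Type*} [CommRing K] (a b : K) (m : ℕ) :
    MvPolynomial.coeff (Finsupp.single (1 : Fin 2) m)
      ((MvPolynomial.C a * MvPolynomial.X 0 + MvPolynomial.C b * MvPolynomial.X 1) ^ m) = b ^ m := by
  induction m with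
  | zero => simp
  | succ m ih =>
    rw [pow_succ, mul_add, ← mul_assoc, ← mul_assoc, MvPolynomial.coeff_add,
      MvPolynomial.coeff_mul_X', MvPolynomial.coeff_mul_X', mul_comm _ (MvPolynomial.C b),
      MvPolynomial.coeff_C_mul, if_neg (by simp), if_pos (by simp)]
    have : (Finsupp.single (1 : Fin 2) (m + 1) - Finsupp.single (1 : Fin 2) 1) =
      Finsupp.single (1 : Fin 2) m := by
      ext k; fin_cases k <;> simp
    rw [this, ih, zero_add, pow_succ, mul_comm]

theorem s15_diag_prod {K : Type*} [CommRing K] (k : ℕ) (a b : K) :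
    ∏ i : Fin k, (a ^ (k - 1 - (i : ℕ)) * b ^ (i : ℕ)) = (a * b) ^ (k * (k - 1) / 2) := by
  rw [Fin.prod_univ_eq_prod_range (fun i => a ^ (k - 1 - i) * b ^ i) k, Finset.prod_mul_distrib,
    Finset.prod_range_reflect (fun i => a ^ i) k, Finset.prod_pow_eq_pow_sum,
    Finset.prod_pow_eq_pow_sum, Finset.sum_range_id, mul_pow]

theorem s15_rho_upper {K : Type*} [CommRing K] (k : ℕ) (A : Matrix (Fin 2) (Fin 2) K)
    (hA : A 1 0 = 0) : (s15_rho k A).det = A.det ^ (k * (k - 1) / 2) := by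
  have hent : ∀ i j : Fin k, s15_rho k A i j = if i ≤ j then
      A 1 1 ^ (i : ℕ) * MvPolynomial.coeff (Finsupp.single (0 : Fin 2) (k - 1 - (j : ℕ)) +
        Finsupp.single (1 : Fin 2) ((j : ℕ) - i))
        ((MvPolynomial.C (A 0 0) * MvPolynomial.X 0 +
          MvPolynomial.C (A 0 1) * MvPolynomial.X 1) ^ (k - 1 - (i : ℕ))) else 0 := by
    intro i j
    unfold s15_rho s15_co
    rw [s15_bas_eq, map_mul, map_pow, map_pow, s15_sub_X, s15_sub_X, hA, map_zero, zero_mul,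
      zero_add, mul_pow, ← map_pow, mul_left_comm, MvPolynomial.coeff_C_mul,
      MvPolynomial.X_pow_eq_monomial, MvPolynomial.coeff_mul_monomial', mul_one, mul_ite, mul_zero]
    congr 1
    · apply propext
      constructor
      · intro h; have := h 1; simpa using this
      · intro h x; fin_cases x
        · simp
        · simpa using h
    · congr 2
      ext x; fin_cases x <;> simp
  rw [Matrix.det_of_upperTriangular]
  · rw [Matrix.det_fin_two, hA, mul_zero, sub_zero, ← s15_diag_prod]
    apply Finset.prod_congr rfl
    intro i _
    rw [hent, if_pos le_rfl, Nat.sub_self, Finsupp.single_zero, add_zero, s15_coeff_lin_pow,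
      mul_comm]
  · intro i j hij
    rw [hent, if_neg]
    simpa using hij

theorem s15_rho_lower {K : Type*} [CommRing K] (k : ℕ) (A : Matrix (Fin 2) (Fin 2) K)
    (hA : A 0 1 = 0) : (s15_rho k A).det = A.det ^ (k * (k - 1) / 2) := by
  have hent : ∀ i j : Fin k, s15_rho k A i j = if j ≤ i then
      A 0 0 ^ (k - 1 - (i : ℕ)) * MvPolynomial.coeff (Finsupp.single (0 : Fin 2)
        (k - 1 - (j : ℕ) - (k - 1 - i)) + Finsupp.single (1 : Fin 2) (j : ℕ))
        ((MvPolynomial.C (A 1 0) * MvPolynomial.X 0 +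
          MvPolynomial.C (A 1 1) * MvPolynomial.X 1) ^ (i : ℕ)) else 0 := by
    intro i j
    unfold s15_rho s15_co
    rw [s15_bas_eq, map_mul, map_pow, map_pow, s15_sub_X, s15_sub_X, hA, map_zero, zero_mul,
      add_zero, mul_pow, ← map_pow, mul_assoc, MvPolynomial.coeff_C_mul,
      MvPolynomial.X_pow_eq_monomial, MvPolynomial.coeff_monomial_mul', one_mul, mul_ite, mul_zero]
    congr 1
    · apply propext
      constructor
      · intro h
        have := h 0
        simp at this
        rw [Fin.le_def]
        omega
      · intro h x
        rw [Fin.le_def] at h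
        fin_cases x
        · simp; omega
        · simp
    · congr 2
      ext x; fin_cases x <;> simp
  rw [Matrix.det_of_lowerTriangular]
  · rw [Matrix.det_fin_two, hA, zero_mul, sub_zero, ← s15_diag_prod]
    apply Finset.prod_congr rfl
    intro i _
    rw [hent, if_pos le_rfl, Nat.sub_self, Finsupp.single_zero, zero_add, s15_coeff_lin_pow']
  · intro i j hij
    rw [hent, if_neg]
    simpa using hij

theorem s15_rho_det {K : Type*} [Field K] (k : ℕ) (hk : 0 < k) (A : Matrix (Fin 2) (Fin 2) K) :
    (s15_rho k A).det = A.det ^ (k * (k - 1) / 2) := by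
  induction A using Matrix.diagonal_transvection_induction with
  | hdiag D _ => exact s15_rho_upper k _ (by simp)
  | htransvec t =>
    obtain ⟨i, j, hij, c⟩ := t
    by_cases hj : i = 0
    · subst hj
      apply s15_rho_upper
      simp [Matrix.TransvectionStruct.toMatrix, Matrix.transvection, Matrix.single]
    · apply s15_rho_lower
      have : i = 1 := by omega
      subst this
      simp [Matrix.TransvectionStruct.toMatrix, Matrix.transvection, Matrix.single]
  | hmul A B hA hB => rw [s15_rho_mul k hk, Matrix.det_mul, hA, hB, Matrix.det_mul, mul_pow]

theorem s15_sylRes_trans {K : Type*} [Field K] (d : ℕ) (hd : 0 < d) (f g : ℕ → K) (l : K)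
    (A : Matrix (Fin 2) (Fin 2) K) (hA : A.det ≠ 0) :
    sylRes d d (fun i => l * FA d f g A i) (fun i => l * GA d f g A i) =
      (l ^ 2 * A.det ^ (d + 1)) ^ d * sylRes d d f g := by
  have h1 := s15_Res_sub d hd _ _ (s15_toForm_homog d f) (s15_toForm_homog d g) A
  rw [s15_rho_det _ (by omega), s15_rho_det _ hd] at h1
  have hexp : (d + d) * (d + d - 1) / 2 = d * (d - 1) / 2 * 2 + d * d := by
    obtain ⟨e, rfl⟩ : ∃ e, d = e + 1 := ⟨d - 1, by omega⟩
    have e1 : (e + 1) * (e + 1 - 1) / 2 * 2 = (e + 1) * e := by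
      apply Nat.div_mul_cancel
      rw [mul_comm]
      exact (Nat.even_mul_succ_self e).two_dvd
    rw [e1, show e + 1 + (e + 1) - 1 = 2 * e + 1 by omega]
    apply Nat.div_eq_of_eq_mul_left (by norm_num)
    ring
  rw [hexp, pow_add, pow_mul, mul_left_comm] at h1
  have h2 := mul_left_cancel₀ (pow_ne_zero _ (pow_ne_zero _ hA)) h1
  rw [s15_sylRes_eq, s15_sylRes_eq, s15_toForm_smul, s15_toForm_smul, s15_toForm_FA, s15_toForm_GA]
  have h3 := s15_Res_comb d (s15_sub A (toForm d f)) (s15_sub A (toForm d g))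
    (l * A 1 1) (-(l * A 0 1)) (-(l * A 1 0)) (l * A 0 0)
  rw [← h2] at h3
  have h4 : l * A 1 1 * (l * A 0 0) - -(l * A 0 1) * -(l * A 1 0) = l ^ 2 * A.det := by
    rw [Matrix.det_fin_two]; ring
  rw [h4] at h3
  have h5 : (l ^ 2 * A.det ^ (d + 1)) ^ d * s15_Res d (toForm d f) (toForm d g) =
     (l ^ 2 * A.det) ^ d * (s15_Res d (toForm d f) (toForm d g) * A.det ^ (d * d)) := by ring
  rw [h5, ← h3]
  congr 1
  · simp only [map_mul, map_neg]; ring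
  · simp only [map_mul, map_neg]; ring

/-! ## Arithmetic -/

theorem s15_cube {R K : Type*} [CommRing R] [Field K] [Algebra R K]
    (p q r a b : R) (s : K) (hr : r ∈ Ideal.span {p, q})
    (ha : algebraMap R K a = algebraMap R K p ^ 2 * s)
    (hb : algebraMap R K b = algebraMap R K q ^ 2 * s) :
    ∃ y : R, algebraMap R K y = algebraMap R K r ^ 3 * s := by
  obtain ⟨x, z, rfl⟩ := Ideal.mem_span_pair.mp hr
  refine ⟨a * (x ^ 3 * p + 3 * x ^ 2 * z * q) + b * (3 * x * z ^ 2 * p + z ^ 3 * q), ?_⟩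
  simp only [map_add, map_mul, map_pow, ha, hb, map_ofNat]
  ring

theorem s15_FA_int {R K : Type*} [CommRing R] [Field K] [Algebra R K]
    (d : ℕ) (f g : ℕ → K) (hf : ∀ i, ∃ a : R, algebraMap R K a = f i)
    (hg : ∀ i, ∃ a : R, algebraMap R K a = g i) (M : Matrix (Fin 2) (Fin 2) R) (i : ℕ) :
    ∃ a : R, algebraMap R K a = FA d f g (M.map (algebraMap R K)) i := by
  choose f0 hf0 using hf
  choose g0 hg0 using hg
  obtain rfl : (fun i => algebraMap R K (f0 i)) = f := funext hf0
  obtain rfl : (fun i => algebraMap R K (g0 i)) = g := funext hg0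
  exact ⟨_, (s15_FA_map (algebraMap R K) d f0 g0 M i).symm⟩

theorem s15_GA_int {R K : Type*} [CommRing R] [Field K] [Algebra R K]
    (d : ℕ) (f g : ℕ → K) (hf : ∀ i, ∃ a : R, algebraMap R K a = f i)
    (hg : ∀ i, ∃ a : R, algebraMap R K a = g i) (M : Matrix (Fin 2) (Fin 2) R) (i : ℕ) :
    ∃ a : R, algebraMap R K a = GA d f g (M.map (algebraMap R K)) i := by
  choose f0 hf0 using hf
  choose g0 hg0 using hg
  obtain rfl : (fun i => algebraMap R K (f0 i)) = f := funext hf0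
  obtain rfl : (fun i => algebraMap R K (g0 i)) = g := funext hg0
  exact ⟨_, (s15_GA_map (algebraMap R K) d f0 g0 M i).symm⟩

section
variable {R K : Type*} [CommRing R] [IsDomain R] [IsPrincipalIdealRing R] [Field K] [Algebra R K]
  [IsFractionRing R K]

theorem s15_int_of_pow {e : ℕ} (he : 0 < e) (x : K) (a : R) (h : algebraMap R K a = x ^ e) :
    ∃ y : R, algebraMap R K y = x := by
  apply IsIntegrallyClosed.algebraMap_eq_of_integral
  apply IsIntegral.of_pow he
  rw [← h]
  exact isIntegral_algebraMap

theorem s15_unit_of_pow {e : ℕ} (he : 0 < e) (x : K) (a : R) (ha : IsUnit a)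
    (h : algebraMap R K a = x ^ e) :
    ∃ y : R, IsUnit y ∧ algebraMap R K y = x := by
  obtain ⟨y, hy⟩ := s15_int_of_pow he x a h
  refine ⟨y, ?_, hy⟩
  rw [← hy, ← map_pow] at h
  have := IsFractionRing.injective R K h
  rw [this] at ha
  exact (isUnit_pow_iff (by omega)).mp ha

theorem s15_root {e : ℕ} (he : 0 < e) (x a : R) (s : K)
    (h : algebraMap R K a = algebraMap R K x ^ 2 * s ^ e) :
    ∃ y : R, algebraMap R K y = algebraMap R K x ^ 2 * s := by
  apply s15_int_of_pow he _ ((x ^ 2) ^ (e - 1) * a)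
  rw [map_mul, h, map_pow, map_pow, mul_pow, ← mul_assoc, ← pow_succ,
    show e - 1 + 1 = e by omega]

theorem s15_bound (d : ℕ) (hd : 2 ≤ d) (f g : ℕ → R) (a b l : K) (ha : a ≠ 0) (hb : b ≠ 0)
    (hF : ∀ i, ∃ x : R, algebraMap R K x = l * FA d (fun i => algebraMap R K (f i))
      (fun i => algebraMap R K (g i)) (Matrix.diagonal ![a, b]) i)
    (hG : ∀ i, ∃ x : R, algebraMap R K x = l * GA d (fun i => algebraMap R K (f i))
      (fun i => algebraMap R K (g i)) (Matrix.diagonal ![a, b]) i)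
    (v : R) (hv : algebraMap R K v * (l ^ 2 * (a * b) ^ (d + 1)) = 1) :
    (∃ x : R, algebraMap R K x = algebraMap R K (sylRes d d f g) ^ 3 * (b / a)) ∧
    (∃ x : R, algebraMap R K x = algebraMap R K (sylRes d d f g) ^ 3 * (a / b)) := by
  obtain ⟨F0, hF0⟩ := hF 0
  obtain ⟨G0, hG0⟩ := hG 0
  obtain ⟨Fd, hFd⟩ := hF d
  obtain ⟨Gd, hGd⟩ := hG d
  rw [s15_FA_diag _ _ _ _ _ _ (by omega)] at hF0 hFd
  rw [s15_GA_diag _ _ _ _ _ _ (by omega)] at hG0 hGd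
  simp only [Nat.sub_self, Nat.sub_zero, pow_zero, mul_one] at hF0 hFd hG0 hGd
  obtain ⟨e, rfl⟩ : ∃ e, d = e + 2 := ⟨d - 2, by omega⟩
  have hl : l ≠ 0 := by
    rintro rfl
    simp at hv
  have hv' : algebraMap R K v = 1 / (l ^ 2 * (a * b) ^ (e + 2 + 1)) := by
    rw [eq_div_iff (by positivity), hv]
  have h1 := s15_root (K := K) (e := e + 3) (by omega) (f 0) (F0 ^ 2 * v) (b / a) (by
    rw [map_mul, map_pow, hF0, hv', div_pow, mul_pow a b]; field_simp; try ring)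
  have h2 := s15_root (K := K) (e := e + 1) (by omega) (g 0) (G0 ^ 2 * v) (b / a) (by
    rw [map_mul, map_pow, hG0, hv', div_pow, mul_pow a b]; field_simp; try ring)
  have h3 := s15_root (K := K) (e := e + 1) (by omega) (f (e + 2)) (Fd ^ 2 * v) (a / b) (by
    rw [map_mul, map_pow, hFd, hv', div_pow, mul_pow a b]; field_simp; try ring)
  have h4 := s15_root (K := K) (e := e + 3) (by omega) (g (e + 2)) (Gd ^ 2 * v) (a / b) (by
    rw [map_mul, map_pow, hGd, hv', div_pow, mul_pow a b]; field_simp; try ring)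
  obtain ⟨y1, h1⟩ := h1
  obtain ⟨y2, h2⟩ := h2
  obtain ⟨y3, h3⟩ := h3
  obtain ⟨y4, h4⟩ := h4
  exact ⟨s15_cube _ _ _ _ _ _ (s15_sylRes_mem_zero _ (by omega) f g) h1 h2,
    s15_cube _ _ _ _ _ _ (s15_sylRes_mem_top _ (by omega) f g) h3 h4⟩

theorem s15_smith_int (A : Matrix (Fin 2) (Fin 2) R) (hA : A.det ≠ 0) :
    ∃ (P Q : Matrix (Fin 2) (Fin 2) R) (a : Fin 2 → R), IsUnit P.det ∧ IsUnit Q.det ∧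
      A = P * Matrix.diagonal a * Q := by
  have hinj : Function.Injective A.mulVecLin := by
    rw [← LinearMap.ker_eq_bot, Matrix.ker_mulVecLin_eq_bot_iff]
    intro v hv
    exact Matrix.eq_zero_of_mulVec_eq_zero hA hv
  let N : Submodule R (Fin 2 → R) := LinearMap.range A.mulVecLin
  let v : Module.Basis (Fin 2) R N :=
    (Pi.basisFun R (Fin 2)).map (LinearEquiv.ofInjective A.mulVecLin hinj)
  have hv : ∀ j, (v j : Fin 2 → R) = A.col j := by
    intro j
    have h : (v j : Fin 2 → R) = A.mulVecLin (Pi.single j 1) := by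
      simp only [v, Module.Basis.map_apply, Pi.basisFun_apply]
      rfl
    rw [h, Matrix.mulVecLin_apply, Matrix.mulVec_single_one]
  obtain ⟨b', a, ab, hab⟩ := Submodule.exists_smith_normal_form_of_rank_eq (N := N)
    (Pi.basisFun R (Fin 2)) (by
      rw [Module.finrank_eq_card_basis v, Module.finrank_eq_card_basis (Pi.basisFun R (Fin 2))])
  refine ⟨(Pi.basisFun R (Fin 2)).toMatrix b', ab.toMatrix v, a, ?_, ?_, ?_⟩
  · exact (Pi.basisFun R (Fin 2)).isUnit_det b'
  · have := ab.isUnit_det v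
    exact this
  · ext i j
    have h := ab.sum_toMatrix_smul_self v j
    have h' := congrArg (fun x : N => (x : Fin 2 → R) i) h
    simp only [hv, Fin.sum_univ_two, Submodule.coe_add, Submodule.coe_smul, hab, Pi.add_apply,
      Pi.smul_apply, smul_eq_mul, Matrix.col_apply] at h'
    rw [← h', Matrix.mul_apply, Fin.sum_univ_two, Matrix.mul_diagonal, Matrix.mul_diagonal]
    simp only [Module.Basis.toMatrix_apply (Pi.basisFun R (Fin 2)), Pi.basisFun_repr]
    ring

theorem s15_smith (A : Matrix (Fin 2) (Fin 2) K) (hA : A.det ≠ 0) :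
    ∃ (P Q : Matrix (Fin 2) (Fin 2) R) (a b : K), IsUnit P.det ∧ IsUnit Q.det ∧
      A = P.map (algebraMap R K) * Matrix.diagonal ![a, b] * Q.map (algebraMap R K) := by
  obtain ⟨c, hc⟩ := IsLocalization.exist_integer_multiples_of_finite (nonZeroDivisors R)
    (fun p : Fin 2 × Fin 2 => A p.1 p.2)
  choose B hB using hc
  have hc0 : algebraMap R K c ≠ 0 := by
    simpa using nonZeroDivisors.coe_ne_zero c
  let A0 : Matrix (Fin 2) (Fin 2) R := fun i j => B (i, j)
  have hA0 : A0.map (algebraMap R K) = algebraMap R K c • A := by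
    ext i j
    change algebraMap R K (B (i, j)) = algebraMap R K c * A i j
    rw [hB]
    exact Algebra.smul_def _ _
  have hdet : A0.det ≠ 0 := by
    intro h
    have h1 : (A0.map (algebraMap R K)).det = 0 := by
      have := RingHom.map_det (algebraMap R K) A0
      rw [h, map_zero] at this
      exact this.symm
    rw [hA0, Matrix.det_smul] at h1
    simp [hc0, hA] at h1
  obtain ⟨P, Q, a, hP, hQ, h⟩ := s15_smith_int A0 hdet
  refine ⟨P, Q, algebraMap R K (a 0) / algebraMap R K c, algebraMap R K (a 1) / algebraMap R K c,
    hP, hQ, ?_⟩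
  have hA' : A = (algebraMap R K c)⁻¹ • A0.map (algebraMap R K) := by
    rw [hA0, smul_smul, inv_mul_cancel₀ hc0, one_smul]
  rw [hA', h, Matrix.map_mul, Matrix.map_mul]
  ext i j
  simp [Matrix.mul_apply, Fin.sum_univ_two, Matrix.diagonal_apply]
  field_simp

end

section
variable {R K : Type*} [CommRing R] [IsDomain R] [IsPrincipalIdealRing R] [Field K] [Algebra R K]
  [IsFractionRing R K]

/-- `A` carries the model to a minimal model. -/
def s15_good (R : Type*) {K : Type*} [CommRing R] [Field K] [Algebra R K] (d : ℕ) (f g : ℕ → K)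
    (A : Matrix (Fin 2) (Fin 2) K) : Prop :=
  ∃ l : K, l ≠ 0 ∧
    (∀ i, ∃ a : R, algebraMap R K a = l * FA d f g A i) ∧
    (∀ i, ∃ b : R, algebraMap R K b = l * GA d f g A i) ∧
    (∃ r : R, algebraMap R K r =
        sylRes d d (fun i => l * FA d f g A i) (fun i => l * GA d f g A i) ∧
      ResIdeal R d f g = Ideal.span {r})

theorem s15_det_map {R K : Type*} [CommRing R] [Field K] [Algebra R K]
    (M : Matrix (Fin 2) (Fin 2) R) :
    (M.map (algebraMap R K)).det = algebraMap R K M.det :=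
  (RingHom.map_det (algebraMap R K) M).symm

theorem s15_good_right (d : ℕ) (hd : 0 < d) (f g : ℕ → K) (A : Matrix (Fin 2) (Fin 2) K)
    (hA : A.det ≠ 0) (h : s15_good R d f g A) (c : K) (hc : c ≠ 0)
    (M : Matrix (Fin 2) (Fin 2) R) (hM : IsUnit M.det) :
    s15_good R d f g (c • (A * M.map (algebraMap R K))) := by
  obtain ⟨l, hl, hF, hG, r, hr, hI⟩ := h
  have hcd : c ^ (d + 1) ≠ 0 := pow_ne_zero _ hc
  have hM0 : algebraMap R K M.det ≠ 0 := (hM.map (algebraMap R K)).ne_zero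
  have e1 : ∀ i, l / c ^ (d + 1) * FA d f g (c • (A * M.map (algebraMap R K))) i =
      FA d (fun i => l * FA d f g A i) (fun i => l * GA d f g A i) (M.map (algebraMap R K)) i := by
    intro i
    rw [s15_FA_smul, s15_FA_lin, s15_FA_mul]
    field_simp
  have e2 : ∀ i, l / c ^ (d + 1) * GA d f g (c • (A * M.map (algebraMap R K))) i =
      GA d (fun i => l * FA d f g A i) (fun i => l * GA d f g A i) (M.map (algebraMap R K)) i := by
    intro i
    rw [s15_GA_smul, s15_GA_lin, s15_GA_mul]
    field_simp
  refine ⟨l / c ^ (d + 1), div_ne_zero hl hcd, ?_, ?_, ?_⟩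
  · intro i
    rw [e1]
    exact s15_FA_int d _ _ hF hG M i
  · intro i
    rw [e2]
    exact s15_GA_int d _ _ hF hG M i
  · refine ⟨(M.det ^ (d + 1)) ^ d * r, ?_, ?_⟩
    · have := s15_sylRes_trans d hd (fun i => l * FA d f g A i) (fun i => l * GA d f g A i) 1
        (M.map (algebraMap R K)) (by rw [s15_det_map]; exact hM0)
      simp only [one_mul, one_pow] at this
      simp only [e1, e2]
      rw [this, map_mul, map_pow, map_pow, hr, s15_det_map]
    · rw [hI, Ideal.span_singleton_mul_left_unit]
      exact (hM.pow _).pow _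

theorem s15_good_smith (d : ℕ) (hd : 2 ≤ d) (f0 g0 : ℕ → R)
    (hres : sylRes d d f0 g0 ≠ 0)
    (hmin : ResIdeal R d (fun i => algebraMap R K (f0 i)) (fun i => algebraMap R K (g0 i)) =
      Ideal.span {sylRes d d f0 g0})
    (A : Matrix (Fin 2) (Fin 2) K) (hA : A.det ≠ 0)
    (h : s15_good R d (fun i => algebraMap R K (f0 i)) (fun i => algebraMap R K (g0 i)) A) :
    ∃ (M M' : Matrix (Fin 2) (Fin 2) R) (c : K), c ≠ 0 ∧ A = c • M.map (algebraMap R K) ∧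
      M * M' = ((sylRes d d f0 g0) ^ 3) ^ 2 • 1 := by
  set N := sylRes d d f0 g0 with hN
  have hinj := IsFractionRing.injective R K
  obtain ⟨l, hl, hF, hG, r, hr, hI⟩ := h
  obtain ⟨P, Q, a, b, hP, hQ, hPQ⟩ := s15_smith (R := R) A hA
  have hPK : algebraMap R K P.det ≠ 0 := (hP.map (algebraMap R K)).ne_zero
  have hQK : algebraMap R K Q.det ≠ 0 := (hQ.map (algebraMap R K)).ne_zero
  have hdet : A.det = algebraMap R K P.det * (a * b) * algebraMap R K Q.det := by
    rw [hPQ, Matrix.det_mul, Matrix.det_mul, s15_det_map, s15_det_map, Matrix.det_diagonal]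
    simp [Fin.prod_univ_two]
  have hab : a * b ≠ 0 := by
    intro h0
    rw [hdet, h0] at hA
    simp at hA
  have ha : a ≠ 0 := left_ne_zero_of_mul hab
  have hb : b ≠ 0 := right_ne_zero_of_mul hab
  -- the unit
  have hmap : sylRes d d (fun i => algebraMap R K (f0 i)) (fun i => algebraMap R K (g0 i)) =
      algebraMap R K N := s15_sylRes_map (algebraMap R K) d d f0 g0
  have hNK : algebraMap R K N ≠ 0 := by
    intro h0
    exact hres (hinj (by rw [h0, map_zero]))
  rw [s15_sylRes_trans d (by omega) _ _ _ _ hA, hmap] at hr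
  have hass : Associated N r := by
    rw [← Ideal.span_singleton_eq_span_singleton, ← hmin, hI]
  obtain ⟨u, hu⟩ := hass
  have hu' : algebraMap R K (u : R) = (l ^ 2 * A.det ^ (d + 1)) ^ d := by
    rw [← hu, map_mul, mul_comm] at hr
    exact mul_right_cancel₀ hNK hr
  obtain ⟨w, hw, hwe⟩ := s15_unit_of_pow (by omega) _ _ u.isUnit hu'
  obtain ⟨w', hw'⟩ := hw.exists_left_inv
  have hv : algebraMap R K (w' * (P.det * Q.det) ^ (d + 1)) * (l ^ 2 * (a * b) ^ (d + 1)) = 1 := by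
    have : algebraMap R K w' * algebraMap R K w = 1 := by rw [← map_mul, hw', map_one]
    rw [hwe, hdet] at this
    rw [← this]
    simp only [map_mul, map_pow]
    ring
  -- the transformed model
  have hQinv : Q * Q⁻¹ = 1 := Matrix.mul_nonsing_inv Q hQ
  have hQinv' : Q⁻¹ * Q = 1 := Matrix.nonsing_inv_mul Q hQ
  have hPinv : P * P⁻¹ = 1 := Matrix.mul_nonsing_inv P hP
  have hAQ : A * (Q⁻¹).map (algebraMap R K) =
      P.map (algebraMap R K) * Matrix.diagonal ![a, b] := by
    rw [hPQ, Matrix.mul_assoc, ← Matrix.map_mul, hQinv, Matrix.map_one _ (map_zero _) (map_one _),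
      Matrix.mul_one]
  have hfP : (fun i => algebraMap R K (FA d f0 g0 P i)) =
      FA d (fun i => algebraMap R K (f0 i)) (fun i => algebraMap R K (g0 i))
        (P.map (algebraMap R K)) :=
    funext fun i => (s15_FA_map (algebraMap R K) d f0 g0 P i).symm
  have hgP : (fun i => algebraMap R K (GA d f0 g0 P i)) =
      GA d (fun i => algebraMap R K (f0 i)) (fun i => algebraMap R K (g0 i))
        (P.map (algebraMap R K)) :=
    funext fun i => (s15_GA_map (algebraMap R K) d f0 g0 P i).symm
  have hb' := s15_bound (R := R) d hd (FA d f0 g0 P) (GA d f0 g0 P) a b l ha hb (by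
      intro i
      rw [hfP, hgP, s15_FA_mul, ← hAQ, ← s15_FA_mul, ← s15_FA_lin]
      exact s15_FA_int d _ _ hF hG _ i) (by
      intro i
      rw [hfP, hgP, s15_GA_mul, ← hAQ, ← s15_GA_mul, ← s15_GA_lin]
      exact s15_GA_int d _ _ hF hG _ i) _ hv
  have hresP : sylRes d d (FA d f0 g0 P) (GA d f0 g0 P) = (P.det ^ (d + 1)) ^ d * N := by
    apply hinj
    rw [← s15_sylRes_map (algebraMap R K)]
    have := s15_sylRes_trans d (by omega) (fun i => algebraMap R K (f0 i))
      (fun i => algebraMap R K (g0 i)) 1 (P.map (algebraMap R K)) (by rw [s15_det_map]; exact hPK)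
    simp only [one_mul, one_pow] at this
    change sylRes d d (fun i => algebraMap R K (FA d f0 g0 P i))
      (fun i => algebraMap R K (GA d f0 g0 P i)) = _
    rw [hfP, hgP, map_mul, map_pow, map_pow, ← hmap, ← s15_det_map]
    exact this
  obtain ⟨p', hp'⟩ := hP.exists_left_inv
  have hclean : ∀ s : K, (∃ x : R, algebraMap R K x =
      algebraMap R K (sylRes d d (FA d f0 g0 P) (GA d f0 g0 P)) ^ 3 * s) →
      ∃ x : R, algebraMap R K x = algebraMap R K (N ^ 3) * s := by
    rintro s ⟨x, hx⟩
    refine ⟨((p' ^ (d + 1)) ^ d) ^ 3 * x, ?_⟩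
    rw [map_mul, hx, hresP, ← map_pow, ← mul_assoc, ← map_mul]
    congr 2
    have : p' ^ (d+1) * P.det ^ (d+1) = 1 := by rw [← mul_pow, hp', one_pow]
    calc ((p' ^ (d + 1)) ^ d) ^ 3 * ((P.det ^ (d + 1)) ^ d * N) ^ 3
        = ((p' ^ (d+1) * P.det ^ (d+1)) ^ d) ^ 3 * N ^ 3 := by ring
      _ = N ^ 3 := by rw [this]; simp
  obtain ⟨x, hx⟩ := hclean _ hb'.1
  obtain ⟨y, hy⟩ := hclean _ hb'.2
  have hxy : x * y = (N ^ 3) ^ 2 := by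
    apply hinj
    rw [map_mul, hx, hy]
    simp only [map_pow]
    field_simp
  have hN3 : algebraMap R K (N ^ 3) ≠ 0 := by rw [map_pow]; exact pow_ne_zero _ hNK
  refine ⟨P * Matrix.diagonal ![N ^ 3, x] * Q, Q⁻¹ * Matrix.diagonal ![N ^ 3, y] * P⁻¹,
    a / algebraMap R K (N ^ 3), div_ne_zero ha hN3, ?_, ?_⟩
  · have hD : Matrix.diagonal ![a, b] = (a / algebraMap R K (N ^ 3)) •
        (Matrix.diagonal ![N ^ 3, x]).map (algebraMap R K) := by
      ext i j
      fin_cases i <;> fin_cases j <;> simp [-map_pow, hx] <;> field_simp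
    rw [hPQ, hD, Matrix.map_mul, Matrix.map_mul, Matrix.mul_smul, Matrix.smul_mul]
  · have hD : Matrix.diagonal ![N ^ 3, x] * Matrix.diagonal ![N ^ 3, y] =
        (N ^ 3) ^ 2 • (1 : Matrix (Fin 2) (Fin 2) R) := by
      rw [← hxy, Matrix.diagonal_mul_diagonal]
      ext i j
      fin_cases i <;> fin_cases j <;> simp [hxy]
      ring
    calc P * Matrix.diagonal ![N ^ 3, x] * Q * (Q⁻¹ * Matrix.diagonal ![N ^ 3, y] * P⁻¹)
        = P * (Matrix.diagonal ![N ^ 3, x] * (Q * Q⁻¹) * Matrix.diagonal ![N ^ 3, y]) * P⁻¹ := by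
          simp only [Matrix.mul_assoc]
      _ = _ := by
          rw [hQinv, Matrix.mul_one, hD, Matrix.mul_smul, Matrix.mul_one, Matrix.smul_mul, hPinv]

/-- Two integral matrices congruent modulo `N`, with inverses up to `N`, differ by a unit. -/
theorem s15_congr (N : R) (hN : N ≠ 0) (M1 M1' M2 M2' : Matrix (Fin 2) (Fin 2) R)
    (h1 : M1 * M1' = N • 1) (h2 : M2 * M2' = N • 1)
    (h : ∀ i j, Ideal.Quotient.mk (Ideal.span {N}) (M1 i j) =
      Ideal.Quotient.mk (Ideal.span {N}) (M2 i j)) :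
    ∃ U : Matrix (Fin 2) (Fin 2) R, IsUnit U.det ∧ M2 = M1 * U := by
  have hE : ∀ i j, ∃ e : R, M2 i j - M1 i j = N * e := by
    intro i j
    have := (Ideal.Quotient.eq.mp (h i j).symm)
    rw [Ideal.mem_span_singleton] at this
    exact this
  choose E hE using hE
  have hE' : M2 - M1 = N • (Matrix.of E) := by
    ext i j
    simp [hE]
  have e1 : M2 = M1 * (1 + M1' * Matrix.of E) := by
    rw [Matrix.mul_add, Matrix.mul_one, ← Matrix.mul_assoc, h1, Matrix.smul_mul, Matrix.one_mul,
      ← hE']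
    abel
  have e2 : M1 = M2 * (1 - M2' * Matrix.of E) := by
    rw [Matrix.mul_sub, Matrix.mul_one, ← Matrix.mul_assoc, h2, Matrix.smul_mul, Matrix.one_mul,
      ← hE']
    abel
  refine ⟨_, ?_, e1⟩
  have hd : M1.det ≠ 0 := by
    intro h0
    have := congrArg Matrix.det h1
    rw [Matrix.det_mul, h0, zero_mul, Matrix.det_smul] at this
    simp at this
    exact hN (pow_eq_zero_iff (two_ne_zero) |>.mp this.symm)
  have h3 := congrArg Matrix.det e1
  have h4 := congrArg Matrix.det e2
  rw [Matrix.det_mul] at h3 h4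
  rw [h3, mul_assoc] at h4
  exact IsUnit.of_mul_eq_one _ (mul_left_cancel₀ hd (by rw [← h4, mul_one]))

theorem s15_main (hfin : ∀ N : R, N ≠ 0 → Finite (R ⧸ Ideal.span {N}))
    (d : ℕ) (hd : 2 ≤ d) (f g : ℕ → K)
    (hres : sylRes d d f g ≠ 0)
    (hfR : ∀ i, ∃ a : R, algebraMap R K a = f i)
    (hgR : ∀ i, ∃ b : R, algebraMap R K b = g i)
    (hmin : ∃ r : R, algebraMap R K r = sylRes d d f g ∧
      ResIdeal R d f g = Ideal.span {r}) :
    ∃ (m : ℕ) (Bs : Fin m → Matrix (Fin 2) (Fin 2) K),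
      ∀ A : Matrix (Fin 2) (Fin 2) K, A.det ≠ 0 →
        (s15_good R d f g A ↔
          (∃ (j : Fin m) (c : K) (M : Matrix (Fin 2) (Fin 2) R),
            c ≠ 0 ∧ IsUnit M.det ∧ A = c • (Bs j * M.map (algebraMap R K)))) := by
  have hinj := IsFractionRing.injective R K
  choose f0 hf0 using hfR
  choose g0 hg0 using hgR
  obtain rfl : (fun i => algebraMap R K (f0 i)) = f := funext hf0
  obtain rfl : (fun i => algebraMap R K (g0 i)) = g := funext hg0
  obtain ⟨r, hr, hI⟩ := hmin
  have hmap : sylRes d d (fun i => algebraMap R K (f0 i)) (fun i => algebraMap R K (g0 i)) =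
      algebraMap R K (sylRes d d f0 g0) := s15_sylRes_map (algebraMap R K) d d f0 g0
  obtain rfl : r = sylRes d d f0 g0 := hinj (by rw [hr, hmap])
  have hr0 : sylRes d d f0 g0 ≠ 0 := by
    intro h0
    rw [hmap, h0, map_zero] at hres
    exact hres rfl
  set N : R := ((sylRes d d f0 g0) ^ 3) ^ 2 with hNdef
  have hN : N ≠ 0 := pow_ne_zero _ (pow_ne_zero _ hr0)
  have := hfin N hN
  let G : Matrix (Fin 2) (Fin 2) K → Prop :=
    s15_good R d (fun i => algebraMap R K (f0 i)) (fun i => algebraMap R K (g0 i))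
  let T : Set (Matrix (Fin 2) (Fin 2) R) :=
    {M | (∃ M', M * M' = N • 1) ∧ (M.map (algebraMap R K)).det ≠ 0 ∧ G (M.map (algebraMap R K))}
  let red : T → (Fin 2 → Fin 2 → R ⧸ Ideal.span {N}) :=
    fun M i j => Ideal.Quotient.mk _ (M.1 i j)
  obtain ⟨m, ⟨e⟩⟩ := Finite.exists_equiv_fin (Set.range red)
  have hrep : ∀ x : Set.range red, ∃ M : T, red M = x := fun x => x.2
  choose rep hrep using hrep
  refine ⟨m, fun j => (rep (e.symm j)).1.map (algebraMap R K), ?_⟩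
  intro A hA
  constructor
  · intro h
    obtain ⟨M, M', c, hc, hAM, hMM⟩ := s15_good_smith d hd f0 g0 hr0 hI A hA h
    have hM1 : M.map (algebraMap R K) =
        c⁻¹ • (A * (1 : Matrix (Fin 2) (Fin 2) R).map (algebraMap R K)) := by
      rw [Matrix.map_one _ (map_zero _) (map_one _), Matrix.mul_one, hAM, smul_smul,
        inv_mul_cancel₀ hc, one_smul]
    have hMT : M ∈ T := by
      refine ⟨⟨M', hMM⟩, ?_, ?_⟩
      · intro h0
        rw [hAM, Matrix.det_smul, h0, mul_zero] at hA
        exact hA rfl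
      · rw [hM1]
        exact s15_good_right d (by omega) _ _ A hA h _ (inv_ne_zero hc) 1 (by simp)
    let x : Set.range red := ⟨red ⟨M, hMT⟩, ⟨_, rfl⟩⟩
    obtain ⟨M1', hM1'⟩ := (rep x).2.1
    obtain ⟨U, hU, hMU⟩ := s15_congr N hN (rep x).1 M1' M M' hM1' hMM (by
      intro i j
      exact congrFun (congrFun (hrep x) i) j)
    refine ⟨e x, c, U, hc, hU, ?_⟩
    rw [hAM, hMU, Matrix.map_mul]
    beta_reduce
    rw [Equiv.symm_apply_apply]
  · rintro ⟨j, c, M, hc, hM, rfl⟩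
    have hT := (rep (e.symm j)).2
    exact s15_good_right d (by omega) _ _ _ hT.2.1 hT.2.2 c hc M hM

end

open NumberField in
theorem s15_fin {K : Type*} [Field K] [NumberField K] (N : 𝓞 K) (hN : N ≠ 0) :
    Finite (𝓞 K ⧸ Ideal.span {N}) := by
  apply Ideal.finiteQuotientOfFreeOfNeBot
  simpa using hN

open NumberField in
/-- Let `K` be a number field whose ring of integers `R = 𝓞 K` is a PID, and
let `[F,G]` be an `R`-minimal model of a rational map of degree `d ≥ 2`. Then the set of
`A ∈ GL₂(K)` for which some `λ ∈ K^×` makes `[λF_A, λG_A]` an `R`-minimal model has image in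
`PGL₂(K)` a finite union of left cosets of the image of `GL₂(R)`. -/
theorem statement15 {K : Type*} [Field K] [NumberField K]
    [IsPrincipalIdealRing (𝓞 K)]
    (d : ℕ) (hd : 2 ≤ d) (f g : ℕ → K)
    (hf : ∀ i, d < i → f i = 0) (hg : ∀ i, d < i → g i = 0)
    (hres : sylRes d d f g ≠ 0)
    (hfR : ∀ i, ∃ a : 𝓞 K, algebraMap (𝓞 K) K a = f i)
    (hgR : ∀ i, ∃ b : 𝓞 K, algebraMap (𝓞 K) K b = g i)
    (hmin : ∃ r : 𝓞 K, algebraMap (𝓞 K) K r = sylRes d d f g ∧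
      ResIdeal (𝓞 K) d f g = Ideal.span {r}) :
    ∃ (m : ℕ) (Bs : Fin m → Matrix (Fin 2) (Fin 2) K),
      ∀ A : Matrix (Fin 2) (Fin 2) K, A.det ≠ 0 →
        ((∃ l : K, l ≠ 0 ∧
            (∀ i, ∃ a : 𝓞 K, algebraMap (𝓞 K) K a = l * FA d f g A i) ∧
            (∀ i, ∃ b : 𝓞 K, algebraMap (𝓞 K) K b = l * GA d f g A i) ∧
            (∃ r : 𝓞 K,
              algebraMap (𝓞 K) K r =
                sylRes d d (fun i => l * FA d f g A i) (fun i => l * GA d f g A i) ∧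
              ResIdeal (𝓞 K) d f g = Ideal.span {r})) ↔
          (∃ (j : Fin m) (c : K) (M : Matrix (Fin 2) (Fin 2) (𝓞 K)),
            c ≠ 0 ∧ IsUnit M.det ∧ A = c • (Bs j * M.map (algebraMap (𝓞 K) K)))) := by
  exact s15_main (R := 𝓞 K) (fun N hN => s15_fin N hN) d hd f g hres hfR hgR hmin

end
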